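/- arXiv:2108.01024 — 3 statements merged into one kernel-verified Lean document; each statement's English description precedes it below -/
import Mathlib

section
/- For every prime power q, the number of strong realizations of the hyperfiguration h_3 in P^3(F_q) is A_{h_3}(4,q) = (q − 2) · |PGL_4(F_q)|. -/
open scoped LinearAlgebra.Projectivization

/-- Three points of `ℙ³(F_q)` are collinear if vector representatives of them span a
subspace of `F_q^4` of dimension at most 2. -/
def Collinear3 (F : Type) [Field F] (x y z : ℙ F (Fin 4 → F)) : Prop :=
  Module.finrank F ↥(x.submodule ⊔ y.submodule ⊔ z.submodule) ≤ 2

/-- Four points of `ℙ³(F_q)` are coplanar if vector representatives of them span a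
subspace of `F_q^4` of dimension at most 3. -/
def Coplanar4 (F : Type) [Field F] (x y z w : ℙ F (Fin 4 → F)) : Prop :=
  Module.finrank F ↥(x.submodule ⊔ y.submodule ⊔ z.submodule ⊔ w.submodule) ≤ 3

/-- A strong realization in `ℙ³(F_q)` of a configuration on points `{0,…,6}` given by a
list of planes and a list of lines: an injective map `σ` such that a triple of image points
is collinear iff its index set is contained in a listed line, and four image points are
coplanar iff their index set is contained in a listed plane. -/
def IsConfigReal (F : Type) [Field F] (planes lines : Finset (Finset (Fin 7)))
    (σ : Fin 7 → ℙ F (Fin 4 → F)) : Prop :=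
  Function.Injective σ ∧
    (∀ a b c : Fin 7, a ≠ b → a ≠ c → b ≠ c →
      (Collinear3 F (σ a) (σ b) (σ c) ↔ ∃ l ∈ lines, ({a, b, c} : Finset (Fin 7)) ⊆ l)) ∧
    (∀ a b c d : Fin 7, a ≠ b → a ≠ c → a ≠ d → b ≠ c → b ≠ d → c ≠ d →
      (Coplanar4 F (σ a) (σ b) (σ c) (σ d) ↔
        ∃ h ∈ planes, ({a, b, c, d} : Finset (Fin 7)) ⊆ h))

/-- Planes of the hyperfiguration `h₁`. -/
def h1planes : Finset (Finset (Fin 7)) :=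
  {{0, 1, 2, 3}, {0, 1, 4, 5}, {0, 2, 4, 6}, {1, 2, 5, 6}, {1, 3, 4, 6}, {2, 3, 4, 5}}

/-- Planes of the hyperfiguration `h₂` (the complement of the Fano plane). -/
def h2planes : Finset (Finset (Fin 7)) :=
  {{0, 1, 2, 3}, {0, 1, 4, 5}, {0, 2, 4, 6}, {0, 3, 5, 6}, {1, 2, 5, 6}, {1, 3, 4, 6},
    {2, 3, 4, 5}}

/-- Planes of the hyperfiguration `h₃`. -/
def h3planes : Finset (Finset (Fin 7)) :=
  {{0, 1, 2, 3}, {0, 1, 2, 4}, {0, 1, 2, 5}, {0, 1, 2, 6}, {0, 3, 4, 5}, {1, 3, 4, 6},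
    {2, 3, 5, 6}}

/-- Lines of the hyperfiguration `h₃`. -/
def h3lines : Finset (Finset (Fin 7)) := {{0, 1, 2}}

/-- Planes of the hyperfiguration `h₅`. -/
def h5planes : Finset (Finset (Fin 7)) :=
  {{0, 1, 2, 3, 4}, {0, 1, 2, 3, 5}, {0, 1, 2, 3, 6}, {0, 4, 5, 6}, {1, 4, 5, 6},
    {2, 4, 5, 6}, {3, 4, 5, 6}}

/-- Lines of the hyperfiguration `h₅`. -/
def h5lines : Finset (Finset (Fin 7)) := {{0, 1, 2, 3}, {4, 5, 6}}

/-!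
After normalising the points `3, 4, 5, 6` to the standard basis, the planes of `h₃` and the line
`{0, 1, 2}` force the remaining points to be `(1, 1, 1, 0)`, `(t, -1, 0, 1)` and their sum, and such
a configuration is a strong realization exactly when `t ≠ 0` and `t ≠ -1`. A projectivity carrying
one normal form to another is trivial and preserves `t`, so over any field the realizations form a
one-parameter family of free `PGL₄`-orbits; over `F_q` the parameter takes `q - 2` values.
-/

open Projectivization Finset MatrixGroups

section LinearIndependence

variable {ι K V : Type*} [AddCommGroup V]

lemma linearIndepOn_iff_card_le_finrank_span [DivisionRing K] [Module K V] (v : ι → V)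
    (s : Finset ι) :
    LinearIndepOn K v (s : Set ι) ↔ #s ≤ Module.finrank K (Submodule.span K (v '' s)) := by
  rw [LinearIndepOn, linearIndependent_iff_card_le_finrank_span, Set.finrank, ← Set.image_eq_range]
  simp only [coe_sort_coe, Fintype.card_coe]

lemma linearIndepOn_iff_forall_sum_smul_eq_zero [Fintype ι] [Ring K] [Module K V] {v : ι → V}
    {s : Set ι} :
    LinearIndepOn K v s ↔
      ∀ f : ι → K, (∀ i ∉ s, f i = 0) → ∑ i, f i • v i = 0 → f = 0 := by
  rw [linearIndepOn_iff, Finsupp.equivFunOnFinite.forall_congr_left]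
  simp only [Finsupp.mem_supported', Finsupp.equivFunOnFinite_symm_apply_apply,
    Finsupp.linearCombination_apply, zero_smul, implies_true, Finsupp.sum_fintype,
    Equiv.symm_apply_eq]
  rfl

lemma exists_eq_sum_erase_of_circuit [DivisionRing K] [Module K V] [DecidableEq ι] {v : ι → V}
    {s : Finset ι} (hs : ¬ LinearIndepOn K v (s : Set ι))
    (herase : ∀ i ∈ s, LinearIndepOn K v (s.erase i : Set ι)) {i : ι} (hi : i ∈ s) :
    ∃ c : ι → K, (∀ j ∈ s.erase i, c j ≠ 0) ∧ v i = ∑ j ∈ s.erase i, c j • v j := by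
  obtain ⟨f, hf, k, hks, hk⟩ := not_linearIndepOn_finset_iff.1 hs
  have hne : ∀ j ∈ s, f j ≠ 0 := by
    intro j hj hfj
    have hzero : ∑ i ∈ s.erase j, f i • v i = 0 := by
      rwa [← add_sum_erase s _ hj, hfj, zero_smul, zero_add] at hf
    have hkj : k ≠ j := by rintro rfl; exact hk hfj
    exact hk (linearIndepOn_finset_iff.1 (herase j hj) f hzero k (mem_erase.2 ⟨hkj, hks⟩))
  refine ⟨fun j => -((f i)⁻¹ * f j), fun j hj =>
    neg_ne_zero.2 (mul_ne_zero (inv_ne_zero (hne i hi)) (hne j (mem_of_mem_erase hj))), ?_⟩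
  rw [← add_sum_erase s _ hi, add_eq_zero_iff_eq_neg] at hf
  calc v i = (f i)⁻¹ • f i • v i := (inv_smul_smul₀ (hne i hi) _).symm
    _ = ∑ j ∈ s.erase i, -((f i)⁻¹ * f j) • v j := by
      simp only [hf, smul_neg, smul_sum, smul_smul, neg_smul, sum_neg_distrib]

lemma exists_eq_mk_comp [DivisionRing K] [Module K V] (σ : ι → ℙ K V) :
    ∃ (v : ι → V) (hv : ∀ i, v i ≠ 0), σ = fun i => .mk K (v i) (hv i) :=
  ⟨fun i => (σ i).rep, fun i => (σ i).rep_nonzero, funext fun i => (mk_rep (σ i)).symm⟩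

lemma mk_ne_mk_iff_linearIndepOn_pair [Field K] [Module K V] {v : ι → V} (hv : ∀ i, v i ≠ 0)
    {i j : ι} (hij : i ≠ j) :
    Projectivization.mk K (v i) (hv i) ≠ .mk K (v j) (hv j) ↔ LinearIndepOn K v {i, j} := by
  rw [ne_comm, ne_eq, mk_eq_mk_iff', linearIndepOn_pair_iff v hij (hv i), not_exists]

end LinearIndependence

section Configurations

variable {F : Type} [Field F]

/-- Whether the points indexed by `s` have to be dependent in a configuration with the given planes
and lines: `s` is a triple inside a line or a quadruple inside a plane. -/
def ConfigDependent (planes lines : Finset (Finset (Fin 7))) (s : Finset (Fin 7)) : Prop :=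
  (#s = 3 ∧ ∃ l ∈ lines, s ⊆ l) ∨ (#s = 4 ∧ ∃ h ∈ planes, s ⊆ h)

instance (planes lines : Finset (Finset (Fin 7))) :
    DecidablePred (ConfigDependent planes lines) :=
  fun _ => inferInstanceAs (Decidable (_ ∨ _))

lemma collinear3_mk_iff {ι : Type*} [DecidableEq ι] {v : ι → Fin 4 → F} (hv : ∀ i, v i ≠ 0)
    {a b c : ι} (h : #{a, b, c} = 3) :
    Collinear3 F (.mk F (v a) (hv a)) (.mk F (v b) (hv b)) (.mk F (v c) (hv c)) ↔
      ¬ LinearIndepOn F v (({a, b, c} : Finset ι) : Set ι) := by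
  rw [linearIndepOn_iff_card_le_finrank_span, h, Collinear3, ← Nat.lt_add_one_iff, not_le,
    coe_insert, coe_insert, coe_singleton, Set.image_insert_eq, Set.image_insert_eq,
    Set.image_singleton, Submodule.span_insert, Submodule.span_insert, ← sup_assoc]
  rfl

lemma coplanar4_mk_iff {ι : Type*} [DecidableEq ι] {v : ι → Fin 4 → F} (hv : ∀ i, v i ≠ 0)
    {a b c d : ι} (h : #{a, b, c, d} = 4) :
    Coplanar4 F (.mk F (v a) (hv a)) (.mk F (v b) (hv b)) (.mk F (v c) (hv c))
        (.mk F (v d) (hv d)) ↔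
      ¬ LinearIndepOn F v (({a, b, c, d} : Finset ι) : Set ι) := by
  rw [linearIndepOn_iff_card_le_finrank_span, h, Coplanar4, ← Nat.lt_add_one_iff, not_le,
    coe_insert, coe_insert, coe_insert, coe_singleton, Set.image_insert_eq, Set.image_insert_eq,
    Set.image_insert_eq, Set.image_singleton, Submodule.span_insert, Submodule.span_insert,
    Submodule.span_insert, ← sup_assoc, ← sup_assoc]
  rfl

lemma isConfigReal_mk_iff {planes lines : Finset (Finset (Fin 7))} {v : Fin 7 → Fin 4 → F}
    (hv : ∀ i, v i ≠ 0) :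
    IsConfigReal F planes lines (fun i => .mk F (v i) (hv i)) ↔
      ∀ s : Finset (Fin 7), #s ≤ 4 →
        (LinearIndepOn F v (s : Set (Fin 7)) ↔ ¬ ConfigDependent planes lines s) := by
  constructor
  · rintro ⟨hinj, hlines, hplanes⟩ s hs
    have hcases : #s = 0 ∨ #s = 1 ∨ #s = 2 ∨ #s = 3 ∨ #s = 4 := by lia
    rcases hcases with h | h | h | h | h
    · simp [card_eq_zero.1 h, ConfigDependent]
    · obtain ⟨a, rfl⟩ := card_eq_one.1 h
      simp [ConfigDependent, hv a]
    · obtain ⟨a, b, hab, rfl⟩ := card_eq_two.1 h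
      simpa [ConfigDependent, h] using
        (mk_ne_mk_iff_linearIndepOn_pair hv hab).1 (hinj.ne hab)
    · obtain ⟨a, b, c, hab, hac, hbc, rfl⟩ := card_eq_three.1 h
      rw [← not_iff_not, ← collinear3_mk_iff hv h, hlines a b c hab hac hbc]
      simp [ConfigDependent, h]
    · obtain ⟨a, b, c, d, hab, hac, had, hbc, hbd, hcd, rfl⟩ := card_eq_four.1 h
      rw [← not_iff_not, ← coplanar4_mk_iff hv h, hplanes a b c d hab hac had hbc hbd hcd]
      simp [ConfigDependent, h]
  · intro h
    refine ⟨fun i j => ?_, fun a b c hab hac hbc => ?_, fun a b c d hab hac had hbc hbd hcd => ?_⟩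
    · contrapose!
      intro hij
      have hcard := card_pair hij
      rw [mk_ne_mk_iff_linearIndepOn_pair hv hij, ← coe_pair, h _ (by lia)]
      simp [ConfigDependent, hcard]
    · have hcard : #{a, b, c} = 3 := card_eq_three.2 ⟨a, b, c, hab, hac, hbc, rfl⟩
      rw [collinear3_mk_iff hv hcard, h _ (by lia)]
      simp [ConfigDependent, hcard]
    · have hcard : #{a, b, c, d} = 4 := by simp [*]
      rw [coplanar4_mk_iff hv hcard, h _ (by lia)]
      simp [ConfigDependent, hcard]

lemma IsConfigReal.smul {planes lines : Finset (Finset (Fin 7))} {σ : Fin 7 → ℙ F (Fin 4 → F)}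
    (h : IsConfigReal F planes lines σ) (g : PGL(4, F)) : IsConfigReal F planes lines (g • σ) := by
  obtain ⟨g, rfl⟩ := Matrix.ProjGenLinGroup.mk_surjective g
  obtain ⟨v, hv, rfl⟩ := exists_eq_mk_comp σ
  change IsConfigReal F planes lines
    (fun i => .mk F (g • v i) ((smul_ne_zero_iff_ne g).2 (hv i)))
  rw [isConfigReal_mk_iff] at h ⊢
  intro s hs
  rw [← h s hs]
  exact g.val.mulVecLin.linearIndepOn_iff_of_injOn
    (Matrix.mulVec_injective_of_isUnit g.isUnit).injOn

end Configurations

lemma configDependent_h3_iff : ∀ s : Finset (Fin 7), #s ≤ 4 →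
    (ConfigDependent h3planes h3lines s ↔
      {0, 1, 2} ⊆ s ∨ {0, 3, 4, 5} ⊆ s ∨ {1, 3, 4, 6} ⊆ s ∨ {2, 3, 5, 6} ⊆ s) := by
  decide +kernel

section NormalForm

variable {F : Type} [Field F]

/-- Representatives of the points of the normal form `modelReal t`: points `3, 4, 5, 6` form the
standard basis, and points `0, 1, 2` are chosen inside the planes `{0, 3, 4, 5}`, `{1, 3, 4, 6}`,
`{2, 3, 5, 6}` so that the last vector of the line `{0, 1, 2}` is the sum of the other two. -/
def modelVec (t : F) : Fin 7 → Fin 4 → F :=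
  ![![1, 1, 1, 0], ![t, -1, 0, 1], ![1 + t, 0, 1, 1],
    ![1, 0, 0, 0], ![0, 1, 0, 0], ![0, 0, 1, 0], ![0, 0, 0, 1]]

lemma modelVec_ne_zero (t : F) (i : Fin 7) : modelVec t i ≠ 0 := by
  fin_cases i <;> simp [modelVec]

/-- The normal form of a strong realization of `h₃` up to projectivities, with parameter `t`. -/
def modelReal (t : F) (i : Fin 7) : ℙ F (Fin 4 → F) :=
  .mk F (modelVec t i) (modelVec_ne_zero t i)

lemma sum_smul_modelVec_eq_zero_iff (t : F) (f : Fin 7 → F) :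
    ∑ i, f i • modelVec t i = 0 ↔
      f 3 = -(f 0 + t * f 1 + (1 + t) * f 2) ∧ f 4 = f 1 - f 0 ∧ f 5 = -(f 0 + f 2) ∧
        f 6 = -(f 1 + f 2) := by
  have hsum : ∑ i, f i • modelVec t i =
      ![f 3 + (f 0 + t * f 1 + (1 + t) * f 2), f 4 - (f 1 - f 0), f 5 + (f 0 + f 2),
        f 6 + (f 1 + f 2)] := by
    ext j
    fin_cases j <;> simp [modelVec, Fin.sum_univ_seven] <;> ring
  simp only [hsum, Matrix.cons_eq_zero_iff, eq_iff_true_of_subsingleton, and_true,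
    add_eq_zero_iff_eq_neg, sub_eq_zero]

lemma not_linearIndepOn_modelVec (t : F) {s : Finset (Fin 7)} (hs : #s ≤ 4)
    (hdep : ConfigDependent h3planes h3lines s) :
    ¬ LinearIndepOn F (modelVec t) (s : Set (Fin 7)) := by
  simp only [linearIndepOn_iff_forall_sum_smul_eq_zero, sum_smul_modelVec_eq_zero_iff,
    SetLike.mem_coe]
  intro h
  have hrel : ∀ f : Fin 7 → F, f ≠ 0 → (∀ i, f i ≠ 0 → i ∈ s) →
      ¬ (f 3 = -(f 0 + t * f 1 + (1 + t) * f 2) ∧ f 4 = f 1 - f 0 ∧ f 5 = -(f 0 + f 2) ∧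
        f 6 = -(f 1 + f 2)) := fun f hf hfs hsum =>
    hf (h f (fun i => not_imp_comm.1 (hfs i)) hsum)
  simp only [configDependent_h3_iff s hs, insert_subset_iff, singleton_subset_iff] at hdep
  rcases hdep with hc | hc | hc | hc
  · refine hrel ![1, 1, -1, 0, 0, 0, 0] ?_ ?_ ?_ <;> simp [Fin.forall_fin_succ, hc]
  · refine hrel ![1, 0, 0, -1, -1, -1, 0] ?_ ?_ ?_ <;> simp [Fin.forall_fin_succ, hc]
  · refine hrel ![0, 1, 0, -t, 1, 0, -1] ?_ ?_ ?_ <;> simp [Fin.forall_fin_succ, hc]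
  · refine hrel ![0, 0, 1, -(1 + t), 0, -1, -1] ?_ ?_ ?_ <;> simp [Fin.forall_fin_succ, hc]

lemma linearIndepOn_modelVec {t : F} (h0 : t ≠ 0) (h1 : t ≠ -1) {s : Finset (Fin 7)} (hs : #s ≤ 4)
    (h : ¬ ConfigDependent h3planes h3lines s) :
    LinearIndepOn F (modelVec t) (s : Set (Fin 7)) := by
  simp only [linearIndepOn_iff_forall_sum_smul_eq_zero, sum_smul_modelVec_eq_zero_iff,
    SetLike.mem_coe]
  rintro f hfs ⟨h3, h4, h5, h6⟩
  have hmem : ∀ i, f i ≠ 0 → i ∈ s := fun i => not_imp_comm.1 (hfs i)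
  -- A relation with at most four nonzero coefficients is zero or supported on a listed circuit.
  have hfive : ∀ c : Finset (Fin 7), #c = 5 → ∃ i ∈ c, f i = 0 := fun c hc => by
    by_contra! hne
    have := card_le_card fun i hi => hmem i (hne i hi)
    lia
  simp only [configDependent_h3_iff s hs, insert_subset_iff, singleton_subset_iff, not_or] at h
  by_cases hf0 : f 0 = 0 <;> by_cases hf1 : f 1 = 0 <;> by_cases hf2 : f 2 = 0
  · ext i
    fin_cases i <;> simp [*]
  · grind
  · grind
  · have : f 3 = 0 := by simpa [hf0, hf1, hf2, h4, h5] using hfive {1, 2, 4, 5, 3} rfl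
    have : f 6 = 0 := by simpa [hf0, hf1, hf2, h4, h5] using hfive {1, 2, 4, 5, 6} rfl
    grind
  · grind
  · have : f 3 = 0 := by simpa [hf0, hf1, hf2, h4, h6] using hfive {0, 2, 4, 6, 3} rfl
    have : f 5 = 0 := by simpa [hf0, hf1, hf2, h4, h6] using hfive {0, 2, 4, 6, 5} rfl
    grind
  · have : f 3 = 0 := by simpa [hf0, hf1, hf2, h5, h6] using hfive {0, 1, 5, 6, 3} rfl
    have : f 4 = 0 := by simpa [hf0, hf1, hf2, h5, h6] using hfive {0, 1, 5, 6, 4} rfl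
    grind
  · grind

lemma isConfigReal_modelReal {t : F} (h0 : t ≠ 0) (h1 : t ≠ -1) :
    IsConfigReal F h3planes h3lines (modelReal t) :=
  (isConfigReal_mk_iff (modelVec_ne_zero t)).2 fun _ hs =>
    ⟨fun hind hdep => not_linearIndepOn_modelVec t hs hdep hind, linearIndepOn_modelVec h0 h1 hs⟩

end NormalForm

section Transitivity

variable {F : Type} [Field F]

lemma IsConfigReal.exists_eq_sum_of_circuit {planes lines : Finset (Finset (Fin 7))}
    {v : Fin 7 → Fin 4 → F} {hv : ∀ i, v i ≠ 0}
    (h : IsConfigReal F planes lines fun i => .mk F (v i) (hv i)) {i : Fin 7}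
    {s : Finset (Fin 7)} (hi : i ∉ s) (hs : #s ≤ 3)
    (hdep : ConfigDependent planes lines (insert i s))
    (herase : ∀ j ∈ insert i s, ¬ ConfigDependent planes lines ((insert i s).erase j)) :
    ∃ c : Fin 7 → F, (∀ j ∈ s, c j ≠ 0) ∧ v i = ∑ j ∈ s, c j • v j := by
  rw [isConfigReal_mk_iff] at h
  have hcard : #(insert i s) ≤ 4 := by rw [card_insert_of_notMem hi]; lia
  simpa only [erase_insert hi] using exists_eq_sum_erase_of_circuit
    (fun hind => (h _ hcard).1 hind hdep)
    (fun j hj => (h _ (card_erase_le.trans hcard)).2 (herase j hj)) (mem_insert_self i s)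

lemma IsConfigReal.linearIndependent_natAdd {v : Fin 7 → Fin 4 → F} {hv : ∀ i, v i ≠ 0}
    (h : IsConfigReal F h3planes h3lines fun i => .mk F (v i) (hv i)) :
    LinearIndependent F fun j : Fin 4 => v (j.natAdd 3) := by
  have hind := ((isConfigReal_mk_iff hv).1 h (univ.map (Fin.natAddEmb 3 : Fin 4 ↪ Fin 7))
    (by decide)).2 (by decide)
  rw [coe_map, coe_univ] at hind
  exact linearIndepOn_univ_iff.1 (hind.comp_of_image (Fin.natAddEmb 3).injective.injOn)

lemma IsConfigReal.exists_relations_h3 {v : Fin 7 → Fin 4 → F} {hv : ∀ i, v i ≠ 0}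
    (h : IsConfigReal F h3planes h3lines fun i => .mk F (v i) (hv i)) :
    ∃ x a b : Fin 7 → F,
      (x 0 ≠ 0 ∧ x 1 ≠ 0) ∧ (a 3 ≠ 0 ∧ a 4 ≠ 0 ∧ a 5 ≠ 0) ∧ (b 3 ≠ 0 ∧ b 4 ≠ 0 ∧ b 6 ≠ 0) ∧
      v 2 = x 0 • v 0 + x 1 • v 1 ∧
      v 0 = a 3 • v 3 + a 4 • v 4 + a 5 • v 5 ∧
      v 1 = b 3 • v 3 + b 4 • v 4 + b 6 • v 6 ∧
      x 0 * a 3 + x 1 * b 3 ≠ 0 ∧ x 0 * a 4 + x 1 * b 4 = 0 := by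
  obtain ⟨x, hx, hv2⟩ := h.exists_eq_sum_of_circuit (i := 2) (s := {0, 1})
    (by decide) (by decide) (by decide) (by decide)
  obtain ⟨a, ha, hv0⟩ := h.exists_eq_sum_of_circuit (i := 0) (s := {3, 4, 5})
    (by decide) (by decide) (by decide) (by decide)
  obtain ⟨b, hb, hv1⟩ := h.exists_eq_sum_of_circuit (i := 1) (s := {3, 4, 6})
    (by decide) (by decide) (by decide) (by decide)
  obtain ⟨c, hc, hv2'⟩ := h.exists_eq_sum_of_circuit (i := 2) (s := {3, 5, 6})
    (by decide) (by decide) (by decide) (by decide)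
  simp only [mem_insert, mem_singleton, forall_eq_or_imp, forall_eq, sum_insert, sum_singleton,
    Fin.reduceEq, or_self, not_false_eq_true, ← add_assoc] at hx ha hb hc hv0 hv1 hv2 hv2'
  have heq : (x 0 * a 3 + x 1 * b 3) • v 3 + (x 0 * a 4 + x 1 * b 4) • v 4 + (x 0 * a 5) • v 5 +
      (x 1 * b 6) • v 6 = c 3 • v 3 + (0 : F) • v 4 + c 5 • v 5 + c 6 • v 6 := by
    linear_combination (norm := module) hv2' - hv2 - x 0 • hv0 - x 1 • hv1
  have hcoords := h.linearIndependent_natAdd.eq_coords_of_eq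
    (f := ![x 0 * a 3 + x 1 * b 3, x 0 * a 4 + x 1 * b 4, x 0 * a 5, x 1 * b 6])
    (g := ![c 3, 0, c 5, c 6]) (by simpa [Fin.sum_univ_four] using heq)
  exact ⟨x, a, b, hx, ha, hb, hv2, hv0, hv1, (hcoords 0).trans_ne hc.1, hcoords 1⟩

lemma IsConfigReal.exists_smul_eq_sum_modelVec {v : Fin 7 → Fin 4 → F} {hv : ∀ i, v i ≠ 0}
    (h : IsConfigReal F h3planes h3lines fun i => .mk F (v i) (hv i)) :
    ∃ t : F, t ≠ 0 ∧ t ≠ -1 ∧ ∃ k : Fin 7 → F, (∀ i, k i ≠ 0) ∧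
      ∀ i, k i • v i = ∑ j : Fin 4, modelVec t i j • k (j.natAdd 3) • v (j.natAdd 3) := by
  obtain ⟨x, a, b, hx, ha, hb, hv2, hv0, hv1, h3, h4⟩ := h.exists_relations_h3
  obtain ⟨t, ht⟩ : ∃ t, x 1 * b 3 = t * (x 0 * a 3) :=
    ⟨_, (div_mul_cancel₀ _ (mul_ne_zero hx.1 ha.1)).symm⟩
  have hw0 : x 0 • v 0 = (x 0 * a 3) • v 3 + (x 0 * a 4) • v 4 + (x 0 * a 5) • v 5 := by
    linear_combination (norm := module) x 0 • hv0
  have hw1 : x 1 • v 1 = t • (x 0 * a 3) • v 3 - (x 0 * a 4) • v 4 + (x 1 * b 6) • v 6 := by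
    linear_combination (norm := module) x 1 • hv1 + ht • v 3 + h4 • v 4
  have hw2 : v 2 = (1 + t) • (x 0 * a 3) • v 3 + (x 0 * a 5) • v 5 + (x 1 * b 6) • v 6 := by
    linear_combination (norm := module) hv2 + hw0 + hw1
  refine ⟨t, by grind, by grind,
    ![x 0, x 1, 1, x 0 * a 3, x 0 * a 4, x 0 * a 5, x 1 * b 6],
    by simp [Fin.forall_fin_succ, *], fun i => ?_⟩
  fin_cases i <;> simp [modelVec, Fin.sum_univ_four, hw0, hw1, hw2, sub_eq_add_neg]

lemma mk_smul_mk_eq_mk_iff {n K : Type*} [Fintype n] [DecidableEq n] [Field K] (g : GL n K)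
    {v w : n → K} (hv : v ≠ 0) (hw : w ≠ 0) :
    Matrix.ProjGenLinGroup.mk g • Projectivization.mk K v hv = .mk K w hw ↔
      ∃ k : Kˣ, k • w = g.val.mulVec v :=
  mk_eq_mk_iff K _ w ((smul_ne_zero_iff_ne g).2 hv) hw

lemma IsConfigReal.exists_smul_modelReal_eq {σ : Fin 7 → ℙ F (Fin 4 → F)}
    (h : IsConfigReal F h3planes h3lines σ) :
    ∃ t : F, t ≠ 0 ∧ t ≠ -1 ∧ ∃ g : PGL(4, F), g • modelReal t = σ := by
  obtain ⟨v, hv, rfl⟩ := exists_eq_mk_comp σ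
  obtain ⟨t, h0, h1, k, hk, hkv⟩ := h.exists_smul_eq_sum_modelVec
  have hind : LinearIndependent F fun j : Fin 4 => k (j.natAdd 3) • v (j.natAdd 3) :=
    h.linearIndependent_natAdd.units_smul fun j => Units.mk0 _ (hk _)
  obtain ⟨g, hg⟩ : IsUnit (Matrix.of fun i j : Fin 4 => k (j.natAdd 3) * v (j.natAdd 3) i) :=
    Matrix.linearIndependent_cols_iff_isUnit.1 hind
  refine ⟨t, h0, h1, .mk g, funext fun i => (mk_smul_mk_eq_mk_iff g _ (hv i)).2
    ⟨Units.mk0 (k i) (hk i), ?_⟩⟩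
  rw [Units.smul_mk0, hkv, hg, Matrix.mulVec_eq_sum]
  simp only [op_smul_eq_smul]
  rfl

end Transitivity

section Classification

variable {F : Type} [Field F]

lemma modelVec_natAdd (t : F) (j : Fin 4) : modelVec t (j.natAdd 3) = Pi.single j 1 := by
  ext i
  fin_cases j <;> fin_cases i <;> rfl

lemma eq_one_and_eq_of_smul_modelReal_eq {g : PGL(4, F)} {t t' : F}
    (h : g • modelReal t = modelReal t') : g = 1 ∧ t = t' := by
  obtain ⟨g, rfl⟩ := Matrix.ProjGenLinGroup.mk_surjective g
  have hpoint (i : Fin 7) : ∃ k : Fˣ, k • modelVec t' i = g.val.mulVec (modelVec t i) :=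
    (mk_smul_mk_eq_mk_iff g _ _).1 (congrFun h i)
  choose k hk using hpoint
  have hdiag : g.val = .diagonal fun j => (k (j.natAdd 3) : F) := by
    refine Matrix.ext_col fun j => ?_
    have hj := hk (j.natAdd 3)
    rw [modelVec_natAdd, modelVec_natAdd, Matrix.mulVec_single_one] at hj
    rw [← hj, ← Matrix.mulVec_single_one, Matrix.diagonal_mulVec_single, Units.smul_def,
      ← Pi.single_smul', smul_eq_mul]
  have h0 : (k 0 : F) = k 3 ∧ (k 0 : F) = k 4 ∧ (k 0 : F) = k 5 := by
    simpa [hdiag, Matrix.mulVec_diagonal, Fin.forall_fin_succ, modelVec, Units.smul_def] using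
      congrFun (hk 0)
  have h1 : (k 1 : F) * t' = k 3 * t ∧ (k 1 : F) = k 4 ∧ (k 1 : F) = k 6 := by
    simpa [hdiag, Matrix.mulVec_diagonal, Fin.forall_fin_succ, modelVec, Units.smul_def] using
      congrFun (hk 1)
  have hk3 : ∀ j : Fin 4, (k (j.natAdd 3) : F) = k 3 := by
    intro j
    fin_cases j
    exacts [rfl, h0.2.1.symm.trans h0.1, h0.2.2.symm.trans h0.1,
      h1.2.2.symm.trans (h1.2.1.trans (h0.2.1.symm.trans h0.1))]
  constructor
  · rw [Matrix.ProjGenLinGroup.mk_eq_one,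
      Matrix.GeneralLinearGroup.mem_center_iff_val_mem_range_scalar]
    exact ⟨k 3, by simp [hdiag, hk3]⟩
  · have hk1 : (k 1 : F) = k 3 := by grind
    exact (mul_left_cancel₀ (k 3).ne_zero (hk1 ▸ h1.1)).symm

end Classification

section Counting

lemma natCard_GL_eq_natCard_PGL_mul (n R : Type*) [Fintype n] [DecidableEq n] [Nonempty n]
    [CommRing R] :
    Nat.card (GL n R) = Nat.card PGL(n, R) * Nat.card Rˣ := by
  have hscalar : Function.Injective (Matrix.GeneralLinearGroup.scalar n : Rˣ →* GL n R) :=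
    fun a b h => Units.ext (Matrix.scalar_inj.1 (congrArg Units.val h))
  rw [Subgroup.card_eq_card_quotient_mul_card_subgroup (Subgroup.center (GL n R)),
    Nat.card_congr (MonoidHom.ofInjective hscalar).toEquiv,
    ← Matrix.GeneralLinearGroup.center_eq_range_scalar]
  rfl

lemma natCard_PGL (n K : Type*) [Fintype n] [DecidableEq n] [Nonempty n] [Field K] [Fintype K] :
    Nat.card PGL(n, K) = Nat.card (GL n K) / (Fintype.card K - 1) := by
  rw [natCard_GL_eq_natCard_PGL_mul, Nat.card_units, Nat.card_eq_fintype_card (α := K),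
    Nat.mul_div_cancel _ (Nat.sub_pos_of_lt Fintype.one_lt_card)]

lemma ncard_compl_zero_neg_one (K : Type*) [Field K] [Fintype K] :
    ({0, -1}ᶜ : Set K).ncard = Fintype.card K - 2 := by
  rw [Set.ncard_compl, Set.ncard_pair (neg_ne_zero.2 one_ne_zero).symm, Nat.card_eq_fintype_card]

end Counting

theorem Ah3_formula_general (F : Type) [Field F] :
    Set.BijOn (fun p : PGL(4, F) × F => p.1 • modelReal p.2) (Set.univ ×ˢ {0, -1}ᶜ)
      {σ | IsConfigReal F h3planes h3lines σ} := by
  refine ⟨?_, ?_, ?_⟩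
  · rintro ⟨g, t⟩ ⟨-, ht⟩
    obtain ⟨h0, h1⟩ : t ≠ 0 ∧ t ≠ -1 := by simpa using ht
    exact (isConfigReal_modelReal h0 h1).smul g
  · rintro ⟨g, t⟩ - ⟨g', t'⟩ - h
    have hquot : (g'⁻¹ * g) • modelReal t = modelReal t' := by
      rw [mul_smul, inv_smul_eq_iff]
      exact h
    obtain ⟨hg, rfl⟩ := eq_one_and_eq_of_smul_modelReal_eq hquot
    rw [inv_mul_eq_one.1 hg]
  · intro σ hσ
    obtain ⟨t, h0, h1, g, rfl⟩ := IsConfigReal.exists_smul_modelReal_eq hσ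
    exact ⟨(g, t), ⟨Set.mem_univ g, by simp [h0, h1]⟩, rfl⟩

/-- `A_{h₃}(4,q) = (q - 2) · |PGL₄(F_q)|`. -/
theorem Ah3_formula (F : Type) [Field F] [Fintype F] (q : ℕ) (hq : q = Fintype.card F) :
    Nat.card {σ : Fin 7 → ℙ F (Fin 4 → F) // IsConfigReal F h3planes h3lines σ} =
      (q - 2) * (Nat.card (GL (Fin 4) F) / (q - 1)) := by
  rw [hq, ← natCard_PGL, ← ncard_compl_zero_neg_one, mul_comm, ← Set.ncard_univ PGL(4, F),
    ← Set.ncard_prod]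
  exact (Ah3_formula_general F).ncard_eq.symm
end

section
/- For every prime power q, the number of strong realizations of the hyperfiguration h_5 in P^3(F_q) is A_{h_5}(4,q) = (q^2 + q + 1)(q^2 + 1)(q + 1)^2 (q − 1)^2 (q − 2) · q^6. -/
open scoped LinearAlgebra.Projectivization

/-!
The lines `{0, 1, 2, 3}` and `{4, 5, 6}` of `h₅` are realized by two skew lines of `ℙ³(F_q)`,
because no plane of `h₅` contains two points of each. Conversely, put four distinct points on one
of two skew lines and three on the other: the points indexed by `S` span a subspace of dimension
`min 2 |S ∩ {0, 1, 2, 3}| + min 2 |S ∩ {4, 5, 6}|`, and comparing this number with `2` and `3`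
recovers the lines and planes of `h₅`. The ordered pairs of skew lines are counted by fibring the
ordered bases of `F_q⁴` over them.
-/

open Module Set
open scoped Finset

section Counting

variable {α β ι X : Type*}

theorem card_subtype_exists_eq_mul [Finite α] [Finite β] {R : α → β → Prop} {c : ℕ}
    (hR : Relator.RightUnique R) (hc : ∀ b, Nat.card {a // R a b} = c) :
    Nat.card {a // ∃ b, R a b} = Nat.card β * c := by
  have := Fintype.ofFinite β
  let forget : (Σ b, {a // R a b}) → {a // ∃ b, R a b} := fun p => ⟨p.2, p.1, p.2.2⟩
  have forget_bijective : forget.Bijective := by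
    refine ⟨?_, fun ⟨a, b, h⟩ => ⟨⟨b, a, h⟩, rfl⟩⟩
    rintro ⟨b, a, h⟩ ⟨b', a', h'⟩ heq
    obtain rfl : a = a' := congrArg Subtype.val heq
    obtain rfl := hR h h'
    rfl
  rw [← Nat.card_eq_of_bijective forget forget_bijective, Nat.card_sigma]
  simp [hc]

theorem card_subtype_eq_mul {γ : Type*} (e : α ≃ β × γ) {p : α → Prop} {q : β → Prop}
    {r : γ → Prop} (h : ∀ a, p a ↔ q (e a).1 ∧ r (e a).2) :
    Nat.card {a // p a} = Nat.card {b // q b} * Nat.card {c // r c} := by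
  rw [← Nat.card_prod]
  exact Nat.card_congr ((e.subtypeEquiv h).trans Equiv.subtypeProdEquivProd)

/-- The points of the family `σ` indexed by `s` are distinct points of `A`, and the remaining ones
are distinct points of `B`. -/
def SplitsInto (s : Set ι) (A B : Set X) (σ : ι → X) : Prop :=
  (MapsTo σ s A ∧ InjOn σ s) ∧ MapsTo σ sᶜ B ∧ InjOn σ sᶜ

theorem SplitsInto.injective {s : Set ι} {A B : Set X} {σ : ι → X} (h : SplitsInto s A B σ)
    (hAB : Disjoint A B) : σ.Injective := by
  rw [← injOn_univ, ← union_compl_self s, injOn_union disjoint_compl_right]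
  exact ⟨h.1.2, h.2.2, fun _ ha _ hb => hAB.ne_of_mem (h.1.1 ha) (h.2.1 hb)⟩

theorem card_injective_mem [Fintype ι] [Finite X] (A : Set X) :
    Nat.card {f : ι → X // (∀ i, f i ∈ A) ∧ f.Injective} =
      (Nat.card A).descFactorial (Fintype.card ι) := by
  have := Fintype.ofFinite A
  let e : {f : ι → X // (∀ i, f i ∈ A) ∧ f.Injective} ≃ (ι ↪ A) :=
    { toFun f := ⟨fun i => ⟨f.1 i, f.2.1 i⟩, fun _ _ h => f.2.2 (congrArg Subtype.val h)⟩
      invFun g := ⟨fun i => g i, fun i => (g i).2, Subtype.val_injective.comp g.injective⟩ }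
  rw [Nat.card_congr e]
  classical simp [Fintype.card_embedding_eq]

theorem card_splitsInto [Fintype ι] [DecidableEq ι] [Finite X] (s : Finset ι) (A B : Set X) :
    Nat.card {σ : ι → X // SplitsInto s A B σ} =
      (Nat.card A).descFactorial #s * (Nat.card B).descFactorial #sᶜ := by
  have h (σ : ι → X) : SplitsInto s A B σ ↔
      ((∀ i : {i // i ∈ s}, σ i ∈ A) ∧ Function.Injective fun i : {i // i ∈ s} => σ i) ∧
        (∀ i : {i // i ∉ s}, σ i ∈ B) ∧ Function.Injective fun i : {i // i ∉ s} => σ i := by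
    simp only [SplitsInto, MapsTo, injOn_iff_injective, Subtype.forall]
    rfl
  rw [card_subtype_eq_mul (Equiv.piEquivPiSubtypeProd (· ∈ s) fun _ => X)
      (q := fun f => (∀ i, f i ∈ A) ∧ f.Injective) (r := fun f => (∀ i, f i ∈ B) ∧ f.Injective) h,
    card_injective_mem, card_injective_mem]
  simp [Finset.card_compl]

theorem cast_prod_pow_sub_pow {q k n : ℕ} (hq : 1 ≤ q) (hk : k ≤ n) :
    ((∏ i : Fin k, (q ^ n - q ^ (i : ℕ)) : ℕ) : ℤ) =
      ∏ i : Fin k, ((q : ℤ) ^ n - (q : ℤ) ^ (i : ℕ)) := by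
  rw [Nat.cast_prod]
  refine Finset.prod_congr rfl fun i _ => ?_
  rw [Nat.cast_sub (Nat.pow_le_pow_right hq (i.2.le.trans hk)), Nat.cast_pow, Nat.cast_pow]

end Counting

section DisjointPairs

variable {K V : Type*} [DivisionRing K] [AddCommGroup V] [Module K V]

variable (K V) in
/-- An ordered pair of subspaces of dimensions `k` and `l` meeting only in `0`; for `k = l = 2`
these are the ordered pairs of skew lines of the projective space. -/
@[ext]
structure DisjointPair (k l : ℕ) where
  fst : Submodule K V
  snd : Submodule K V
  finrank_fst : finrank K fst = k
  finrank_snd : finrank K snd = l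
  disjoint : Disjoint fst snd

instance [Finite V] (k l : ℕ) : Finite (DisjointPair K V k l) :=
  Finite.of_injective (fun p => (p.fst, p.snd)) fun _ _ h =>
    DisjointPair.ext (congrArg Prod.fst h) (congrArg Prod.snd h)

theorem span_range_eq_of_linearIndependent {ι : Type*} [Fintype ι] [FiniteDimensional K V]
    {L : Submodule K V} {u : ι → V} (hL : finrank K L = Fintype.card ι) (hu : ∀ i, u i ∈ L)
    (hli : LinearIndependent K u) : Submodule.span K (range u) = L :=
  Submodule.eq_of_le_of_finrank_eq (Submodule.span_le.2 (range_subset_iff.2 hu))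
    ((finrank_span_eq_card hli).trans hL.symm)

theorem card_linearIndependent_mem [Finite K] [Finite V] (L : Submodule K V) {k : ℕ}
    (hk : k ≤ finrank K L) :
    Nat.card {u : Fin k → V // (∀ i, u i ∈ L) ∧ LinearIndependent K u} =
      ∏ i : Fin k, (Nat.card K ^ finrank K L - Nat.card K ^ (i : ℕ)) := by
  have := Fintype.ofFinite K
  let e : {u : Fin k → V // (∀ i, u i ∈ L) ∧ LinearIndependent K u} ≃
      {u : Fin k → L // LinearIndependent K u} :=
    { toFun u := ⟨fun i => ⟨u.1 i, u.2.1 i⟩, .of_comp L.subtype u.2.2⟩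
      invFun u := ⟨fun i => u.1 i, fun i => (u.1 i).2, u.2.map' L.subtype L.ker_subtype⟩ }
  rw [Nat.card_congr e, card_linearIndependent hk, Nat.card_eq_fintype_card]

/-- The first `k` vectors of `v` form a basis of the first subspace of the pair, and the last `l`
ones form a basis of the second. -/
def DisjointPair.IsBasis {k l : ℕ} (v : Fin k ⊕ Fin l → V) (p : DisjointPair K V k l) : Prop :=
  ((∀ i, (v ∘ Sum.inl) i ∈ p.fst) ∧ LinearIndependent K (v ∘ Sum.inl)) ∧
    (∀ i, (v ∘ Sum.inr) i ∈ p.snd) ∧ LinearIndependent K (v ∘ Sum.inr)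

namespace DisjointPair

variable {k l : ℕ}

theorem rightUnique_isBasis [FiniteDimensional K V] :
    Relator.RightUnique (IsBasis : (Fin k ⊕ Fin l → V) → DisjointPair K V k l → Prop) := by
  have spans {v : Fin k ⊕ Fin l → V} {p : DisjointPair K V k l} (h : IsBasis v p) :
      Submodule.span K (range (v ∘ Sum.inl)) = p.fst ∧
        Submodule.span K (range (v ∘ Sum.inr)) = p.snd :=
    ⟨span_range_eq_of_linearIndependent (by simp [p.finrank_fst]) h.1.1 h.1.2,
      span_range_eq_of_linearIndependent (by simp [p.finrank_snd]) h.2.1 h.2.2⟩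
  exact fun v p p' h h' => DisjointPair.ext ((spans h).1.symm.trans (spans h').1)
    ((spans h).2.symm.trans (spans h').2)

theorem exists_isBasis_iff {v : Fin k ⊕ Fin l → V} :
    (∃ p : DisjointPair K V k l, IsBasis v p) ↔ LinearIndependent K v := by
  rw [linearIndependent_sum]
  constructor
  · rintro ⟨p, ⟨mem_fst, li_fst⟩, mem_snd, li_snd⟩
    exact ⟨li_fst, li_snd, p.disjoint.mono (Submodule.span_le.2 (range_subset_iff.2 mem_fst))
      (Submodule.span_le.2 (range_subset_iff.2 mem_snd))⟩
  · rintro ⟨li_fst, li_snd, hdisj⟩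
    exact ⟨⟨_, _, by simp [finrank_span_eq_card li_fst], by simp [finrank_span_eq_card li_snd],
      hdisj⟩, ⟨fun i => Submodule.subset_span (mem_range_self i), li_fst⟩,
      fun i => Submodule.subset_span (mem_range_self i), li_snd⟩

theorem card_isBasis [Finite K] [Finite V] (p : DisjointPair K V k l) :
    Nat.card {v : Fin k ⊕ Fin l → V // IsBasis v p} =
      (∏ i : Fin k, (Nat.card K ^ k - Nat.card K ^ (i : ℕ))) *
        ∏ i : Fin l, (Nat.card K ^ l - Nat.card K ^ (i : ℕ)) := by
  rw [card_subtype_eq_mul (p := (IsBasis · p)) (Equiv.sumArrowEquivProdArrow (Fin k) (Fin l) V)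
      (q := fun u => (∀ i, u i ∈ p.fst) ∧ LinearIndependent K u)
      (r := fun u => (∀ i, u i ∈ p.snd) ∧ LinearIndependent K u) fun _ => Iff.rfl,
    card_linearIndependent_mem _ p.finrank_fst.ge, card_linearIndependent_mem _ p.finrank_snd.ge,
    p.finrank_fst, p.finrank_snd]

theorem card_mul_prod_pow_sub_pow [Finite K] [Finite V] (hkl : k + l ≤ finrank K V) :
    Nat.card (DisjointPair K V k l) *
      ((∏ i : Fin k, (Nat.card K ^ k - Nat.card K ^ (i : ℕ))) *
        ∏ i : Fin l, (Nat.card K ^ l - Nat.card K ^ (i : ℕ))) =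
      ∏ i : Fin (k + l), (Nat.card K ^ finrank K V - Nat.card K ^ (i : ℕ)) := by
  have := Fintype.ofFinite K
  rw [← card_subtype_exists_eq_mul rightUnique_isBasis card_isBasis,
    Nat.card_eq_fintype_card (α := K), ← card_linearIndependent hkl]
  refine Nat.card_congr ((finSumFinEquiv.arrowCongr (Equiv.refl V)).subtypeEquiv fun v => ?_)
  rw [exists_isBasis_iff, ← linearIndependent_equiv finSumFinEquiv.symm]
  rfl

theorem card_two_two [Finite K] (hV : finrank K V = 4) :
    Nat.card (DisjointPair K V 2 2) =
      Nat.card K ^ 4 * (Nat.card K ^ 2 + 1) * (Nat.card K ^ 2 + Nat.card K + 1) := by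
  have : FiniteDimensional K V := .of_finrank_pos (by lia)
  have : Finite V := Module.finite_of_finite K
  have hcard := congrArg (Nat.cast : ℕ → ℤ)
    (card_mul_prod_pow_sub_pow (K := K) (V := V) (k := 2) (l := 2) hV.ge)
  have one_lt : 1 < Nat.card K := Finite.one_lt_card
  rw [hV] at hcard
  generalize Nat.card K = q at *
  rw [Nat.cast_mul, Nat.cast_mul, cast_prod_pow_sub_pow one_lt.le le_rfl,
    cast_prod_pow_sub_pow one_lt.le le_rfl] at hcard
  simp only [Fin.prod_univ_two, Fin.prod_univ_four, Fin.coe_ofNat_eq_mod, Nat.reduceMod,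
    Nat.reduceAdd, pow_zero, pow_one] at hcard
  have hq : (q : ℤ) ≠ 0 ∧ (q : ℤ) - 1 ≠ 0 ∧ (q : ℤ) + 1 ≠ 0 := by lia
  have hne : ((q : ℤ) * (q - 1) ^ 2 * (q + 1)) ^ 2 ≠ 0 :=
    pow_ne_zero _ (mul_ne_zero (mul_ne_zero hq.1 (pow_ne_zero _ hq.2.1)) hq.2.2)
  zify
  apply mul_right_cancel₀ hne
  linear_combination hcard

end DisjointPair

end DisjointPairs

section PointsAndRank

variable {K V ι : Type*} [DivisionRing K] [AddCommGroup V] [Module K V]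

theorem card_submodule_projectivization (L : Submodule K V) :
    Nat.card L.projectivization = Nat.card (ℙ K L) := by
  let incl : ℙ K L → ℙ K V := Projectivization.map L.subtype L.subtype_injective
  have range_incl : range incl = L.projectivization := by
    ext x
    constructor
    · rintro ⟨y, rfl⟩
      induction y using Projectivization.ind with
      | h v hv => exact (Submodule.mk_mem_projectivization_iff ..).2 v.2
    · induction x using Projectivization.ind with
      | h v hv =>
        intro h
        exact ⟨.mk K ⟨v, (Submodule.mk_mem_projectivization_iff ..).1 h⟩ (by simpa using hv), rfl⟩
  rw [← SetLike.coe_sort_coe, ← range_incl]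
  exact (Nat.card_congr (Equiv.ofInjective incl (Projectivization.map_injective ..))).symm

theorem finrank_sup_submodule_of_ne {x y : ℙ K V} (hxy : x ≠ y) :
    finrank K ↥(x.submodule ⊔ y.submodule) = 2 := by
  have hli := Projectivization.linearIndependent_pair_iff_ne.2 hxy
  rw [x.submodule_eq, y.submodule_eq, ← Submodule.span_insert,
    ← Matrix.range_cons_cons_empty _ _ ![], finrank_span_eq_card hli, Fintype.card_fin]

theorem finrank_sup_eq_add_of_disjoint [FiniteDimensional K V] {L M : Submodule K V}
    (h : Disjoint L M) : finrank K ↥(L ⊔ M) = finrank K L + finrank K M := by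
  rw [← Submodule.finrank_sup_add_finrank_inf_eq L M, h.eq_bot, finrank_bot, add_zero]

theorem finrank_sup_eq_min_of_mapsTo_line [FiniteDimensional K V] {L : Submodule K V}
    (hL : finrank K L = 2) {σ : ι → ℙ K V} {S : Finset ι}
    (hσ : ∀ i ∈ S, σ i ∈ L.projectivization) (hinj : InjOn σ S) :
    finrank K ↥(S.sup fun i => (σ i).submodule) = min 2 #S := by
  simp only [Submodule.mem_projectivization_iff_submodule_le] at hσ
  obtain hS | hS := le_or_gt 2 #S
  · obtain ⟨a, ha, b, hb, hab⟩ := Finset.one_lt_card.1 hS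
    rw [min_eq_left hS]
    apply le_antisymm
    · exact (Submodule.finrank_mono (Finset.sup_le hσ)).trans hL.le
    · rw [← finrank_sup_submodule_of_ne (hinj.ne ha hb hab)]
      exact Submodule.finrank_mono (sup_le (Finset.le_sup (f := fun i => (σ i).submodule) ha)
        (Finset.le_sup (f := fun i => (σ i).submodule) hb))
  · interval_cases hcard : #S
    · simp [Finset.card_eq_zero.1 hcard]
    · obtain ⟨a, rfl⟩ := Finset.card_eq_one.1 hcard
      rw [Finset.sup_singleton, (σ a).finrank_submodule]
      rfl

namespace DisjointPair

variable {p : DisjointPair K V 2 2} {s : Finset ι} {σ : ι → ℙ K V}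

theorem finrank_sup_eq_of_splitsInto [FiniteDimensional K V] [DecidableEq ι]
    (h : SplitsInto s p.fst.projectivization p.snd.projectivization σ) (S : Finset ι) :
    finrank K ↥(S.sup fun i => (σ i).submodule) = min 2 #(S ∩ s) + min 2 #(S \ s) := by
  have mem_fst : ∀ i ∈ S ∩ s, σ i ∈ p.fst.projectivization :=
    fun i hi => h.1.1 (Finset.mem_inter.1 hi).2
  have mem_snd : ∀ i ∈ S \ s, σ i ∈ p.snd.projectivization :=
    fun i hi => h.2.1 (Finset.mem_sdiff.1 hi).2
  have injOn_fst : InjOn σ (S ∩ s : Finset ι) := h.1.2.mono (by simp)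
  have injOn_snd : InjOn σ (S \ s : Finset ι) := h.2.2.mono fun i hi => (Finset.mem_sdiff.1 hi).2
  have hdisj : Disjoint ((S ∩ s).sup fun i => (σ i).submodule)
      ((S \ s).sup fun i => (σ i).submodule) := by
    simp only [Submodule.mem_projectivization_iff_submodule_le] at mem_fst mem_snd
    exact p.disjoint.mono (Finset.sup_le mem_fst) (Finset.sup_le mem_snd)
  rw [← finrank_sup_eq_min_of_mapsTo_line p.finrank_fst mem_fst injOn_fst,
    ← finrank_sup_eq_min_of_mapsTo_line p.finrank_snd mem_snd injOn_snd,
    ← finrank_sup_eq_add_of_disjoint hdisj, ← Finset.sup_union, Finset.union_comm,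
    Finset.sdiff_union_inter]

theorem disjoint_projectivization {k l : ℕ} (p : DisjointPair K V k l) :
    Disjoint (p.fst.projectivization : Set (ℙ K V)) p.snd.projectivization := by
  rw [Set.disjoint_left]
  intro x hfst hsnd
  rw [SetLike.mem_coe, Submodule.mem_projectivization_iff_submodule_le] at hfst hsnd
  have hrank := x.finrank_submodule
  rw [le_bot_iff.1 (p.disjoint hfst hsnd), finrank_bot] at hrank
  exact zero_ne_one hrank

theorem rightUnique_splitsInto {s : Set ι} (hs : s.Nontrivial) (hs' : sᶜ.Nontrivial) :
    Relator.RightUnique fun (σ : ι → ℙ K V) (p : DisjointPair K V 2 2) =>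
      SplitsInto s p.fst.projectivization p.snd.projectivization σ := by
  intro σ p p' h h'
  obtain ⟨a, ha, b, hb, hab⟩ := hs
  obtain ⟨c, hc, d, hd, hcd⟩ := hs'
  refine DisjointPair.ext ?_ ?_
  · exact Projectivization.line_unique (h.1.2.ne ha hb hab) _ _ p.finrank_fst p'.finrank_fst
      (h.1.1 ha) (h.1.1 hb) (h'.1.1 ha) (h'.1.1 hb)
  · exact Projectivization.line_unique (h.2.2.ne hc hd hcd) _ _ p.finrank_snd p'.finrank_snd
      (h.2.1 hc) (h.2.1 hd) (h'.2.1 hc) (h'.2.1 hd)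

end DisjointPair

end PointsAndRank

section Realizations

variable {F : Type} [Field F] {planes lines : Finset (Finset (Fin 7))}
  {σ : Fin 7 → ℙ F (Fin 4 → F)}

namespace IsConfigReal

theorem submodule_le_sup (h : IsConfigReal F planes lines σ) {l : Finset (Fin 7)} (hl : l ∈ lines)
    {a b c : Fin 7} (ha : a ∈ l) (hb : b ∈ l) (hc : c ∈ l) (hab : a ≠ b) :
    (σ c).submodule ≤ (σ a).submodule ⊔ (σ b).submodule := by
  obtain rfl | hac := eq_or_ne a c
  · exact le_sup_left
  obtain rfl | hbc := eq_or_ne b c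
  · exact le_sup_right
  have hcol : Collinear3 F (σ a) (σ b) (σ c) :=
    (h.2.1 a b c hab hac hbc).2 ⟨l, hl, by simp [Finset.insert_subset_iff, *]⟩
  rw [← sup_eq_left]
  exact (Submodule.eq_of_le_of_finrank_le le_sup_left
    (by rwa [finrank_sup_submodule_of_ne (h.1.ne hab)])).symm

theorem disjoint_sup_sup (h : IsConfigReal F planes lines σ) {a b c d : Fin 7}
    (hab : a ≠ b) (hac : a ≠ c) (had : a ≠ d) (hbc : b ≠ c) (hbd : b ≠ d) (hcd : c ≠ d)
    (hplanes : ¬∃ P ∈ planes, {a, b, c, d} ⊆ P) :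
    Disjoint ((σ a).submodule ⊔ (σ b).submodule) ((σ c).submodule ⊔ (σ d).submodule) := by
  have hcop := (h.2.2 a b c d hab hac had hbc hbd hcd).not.2 hplanes
  have hrank := Submodule.finrank_sup_add_finrank_inf_eq
    ((σ a).submodule ⊔ (σ b).submodule) ((σ c).submodule ⊔ (σ d).submodule)
  rw [finrank_sup_submodule_of_ne (h.1.ne hab), finrank_sup_submodule_of_ne (h.1.ne hcd),
    ← sup_assoc] at hrank
  rw [Coplanar4] at hcop
  rw [disjoint_iff, ← Submodule.finrank_eq_zero]
  lia

theorem exists_splitsInto (h : IsConfigReal F h5planes h5lines σ) :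
    ∃ p : DisjointPair F (Fin 4 → F) 2 2,
      SplitsInto ({0, 1, 2, 3} : Finset (Fin 7)) p.fst.projectivization p.snd.projectivization
        σ := by
  refine ⟨⟨(σ 0).submodule ⊔ (σ 1).submodule, (σ 4).submodule ⊔ (σ 5).submodule,
    finrank_sup_submodule_of_ne (h.1.ne (by decide)),
    finrank_sup_submodule_of_ne (h.1.ne (by decide)),
    h.disjoint_sup_sup (by decide) (by decide) (by decide) (by decide) (by decide) (by decide)
      (by decide)⟩, ⟨fun i hi => ?_, h.1.injOn⟩, fun i hi => ?_, h.1.injOn⟩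
  · rw [SetLike.mem_coe, Submodule.mem_projectivization_iff_submodule_le]
    exact h.submodule_le_sup (l := {0, 1, 2, 3}) (by decide) (by decide) (by decide) hi (by decide)
  · rw [SetLike.mem_coe, Submodule.mem_projectivization_iff_submodule_le]
    have mem_line : ∀ i ∉ ({0, 1, 2, 3} : Finset (Fin 7)), i ∈ ({4, 5, 6} : Finset (Fin 7)) := by
      decide
    exact h.submodule_le_sup (l := {4, 5, 6}) (by decide) (by decide) (by decide)
      (mem_line i hi) (by decide)

end IsConfigReal

theorem exists_h5lines_iff (S : Finset (Fin 7)) (hS : #S = 3) :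
    (∃ l ∈ h5lines, S ⊆ l) ↔
      min 2 #(S ∩ {0, 1, 2, 3}) + min 2 #(S \ {0, 1, 2, 3}) ≤ 2 := by
  revert S
  decide +kernel

theorem exists_h5planes_iff (S : Finset (Fin 7)) (hS : #S = 4) :
    (∃ P ∈ h5planes, S ⊆ P) ↔
      min 2 #(S ∩ {0, 1, 2, 3}) + min 2 #(S \ {0, 1, 2, 3}) ≤ 3 := by
  revert S
  decide +kernel

theorem DisjointPair.isConfigReal_of_splitsInto {p : DisjointPair F (Fin 4 → F) 2 2}
    (h : SplitsInto ({0, 1, 2, 3} : Finset (Fin 7)) p.fst.projectivization p.snd.projectivization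
      σ) : IsConfigReal F h5planes h5lines σ := by
  refine ⟨h.injective p.disjoint_projectivization, fun a b c hab hac hbc => ?_,
    fun a b c d hab hac had hbc hbd hcd => ?_⟩
  · have hS : #{a, b, c} = 3 := Finset.card_eq_three.2 ⟨a, b, c, hab, hac, hbc, rfl⟩
    rw [exists_h5lines_iff _ hS, ← finrank_sup_eq_of_splitsInto h, Collinear3, Finset.sup_insert,
      Finset.sup_insert, Finset.sup_singleton, sup_assoc]
  · have hS : #{a, b, c, d} = 4 :=
      Finset.card_eq_four.2 ⟨a, b, c, d, hab, hac, had, hbc, hbd, hcd, rfl⟩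
    rw [exists_h5planes_iff _ hS, ← finrank_sup_eq_of_splitsInto h, Coplanar4, Finset.sup_insert,
      Finset.sup_insert, Finset.sup_insert, Finset.sup_singleton, sup_assoc, sup_assoc]

theorem isConfigReal_h5_iff : IsConfigReal F h5planes h5lines σ ↔
    ∃ p : DisjointPair F (Fin 4 → F) 2 2,
      SplitsInto ({0, 1, 2, 3} : Finset (Fin 7)) p.fst.projectivization p.snd.projectivization σ :=
  ⟨IsConfigReal.exists_splitsInto, fun ⟨_, h⟩ => DisjointPair.isConfigReal_of_splitsInto h⟩

variable (F) in
theorem card_isConfigReal_h5 [Finite F] :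
    Nat.card {σ // IsConfigReal F h5planes h5lines σ} =
      Nat.card (DisjointPair F (Fin 4 → F) 2 2) *
        ((Nat.card F + 1).descFactorial 4 * (Nat.card F + 1).descFactorial 3) := by
  simp only [isConfigReal_h5_iff]
  apply card_subtype_exists_eq_mul
  · exact DisjointPair.rightUnique_splitsInto ⟨0, by decide, 1, by decide, by decide⟩
      ⟨4, by decide, 5, by decide, by decide⟩
  · intro p
    rw [card_splitsInto]
    simp only [SetLike.coe_sort_coe, card_submodule_projectivization,
      Projectivization.card_of_finrank_two F p.fst p.finrank_fst,
      Projectivization.card_of_finrank_two F p.snd p.finrank_snd]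
    rfl

end Realizations

/-- `A_{h₅}(4,q) = (q^2+q+1)(q^2+1)(q+1)^2(q-1)^2(q-2) q^6`. -/
theorem Ah5_formula (F : Type) [Field F] [Fintype F] (q : ℕ) (hq : q = Fintype.card F) :
    (Nat.card {σ : Fin 7 → ℙ F (Fin 4 → F) // IsConfigReal F h5planes h5lines σ} : ℤ) =
      ((q : ℤ)^2 + q + 1) * ((q : ℤ)^2 + 1) * ((q : ℤ) + 1)^2 * ((q : ℤ) - 1)^2 *
        ((q : ℤ) - 2) * (q : ℤ)^6 := by
  rw [card_isConfigReal_h5, DisjointPair.card_two_two (by simp), Nat.card_eq_fintype_card, ← hq]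
  obtain ⟨r, rfl⟩ := Nat.exists_eq_add_of_le' (hq ▸ Fintype.one_lt_card : 1 < q)
  simp only [Nat.descFactorial_succ, Nat.descFactorial_zero]
  push_cast
  ring
end

section
/- For every prime power q, the number of strong realizations of the hyperfiguration h_2 in P^3(F_q) and the number F(q) of strong realizations of the Fano plane in P^2(F_q) satisfy A_{h_2}(4,q) · |PGL_3(F_q)| = F(q) · |PGL_4(F_q)|. -/
open scoped LinearAlgebra.Projectivization

/-- Three points of `ℙ²(F_q)` are collinear if vector representatives of them span a
subspace of `F_q^3` of dimension at most 2. -/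
def Collinear3P2 (F : Type) [Field F] (x y z : ℙ F (Fin 3 → F)) : Prop :=
  Module.finrank F ↥(x.submodule ⊔ y.submodule ⊔ z.submodule) ≤ 2

/-- Lines of the Fano plane on points `{0,…,6}`. -/
def fanoLines : Finset (Finset (Fin 7)) :=
  {{0, 1, 2}, {0, 3, 4}, {0, 5, 6}, {1, 3, 5}, {1, 4, 6}, {2, 3, 6}, {2, 4, 5}}

/-- A strong realization of the Fano plane in `ℙ²(F_q)`: an injective
`τ : {0,…,6} → ℙ²(F_q)` such that a triple of image points is collinear iff its index set
is one of the seven Fano lines. `F(q)` is the number of such maps. -/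
def IsFanoReal (F : Type) [Field F] (τ : Fin 7 → ℙ F (Fin 3 → F)) : Prop :=
  Function.Injective τ ∧
    ∀ a b c : Fin 7, a ≠ b → a ≠ c → b ≠ c →
      (Collinear3P2 F (τ a) (τ b) (τ c) ↔ ({a, b, c} : Finset (Fin 7)) ∈ fanoLines)

/-!
Choose vector representatives of the seven points and arrange them as the rows of a `7 × k` matrix.
A full-rank `7 × 4` matrix `A` and a full-rank `7 × 3` matrix `B` with `Aᵀ B = 0` are dual: four
rows of `A` are independent iff the complementary three rows of `B` are, and complementation turns
the planes of `h₂` into the lines of a Fano plane. For fixed `A` the admissible `B` are the bases of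
`ker Aᵀ`, so there are `|GL₃|` of them, and vice versa; counting the dual pairs `(A, B)` in two ways
gives the identity for matrices, and the `(q - 1)^7` rescalings of the rows cancel.
-/

open Module Matrix Projectivization
open scoped Finset FinsetFamily

section HasNonbases

variable {ι F V : Type*} [Field F] [AddCommGroup V] [Module F V]

/-- The vectors `v a` realize the matroid of rank `dim V` whose nonbases are the members of `N`:
among the index sets of size `dim V`, exactly those in `N` are dependent. Strong realizations in a
projective space are the case `v = Projectivization.rep ∘ σ`. -/
def HasNonbases (F : Type*) {V : Type*} [Field F] [AddCommGroup V] [Module F V]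
    (N : Finset (Finset ι)) (v : ι → V) : Prop :=
  ∀ s : Finset ι, #s = finrank F V → (LinearIndepOn F v s ↔ s ∉ N)

variable {N : Finset (Finset ι)} {v : ι → V}

lemma HasNonbases.linearIndepOn_of_subset (h : HasNonbases F N v) {s t : Finset ι}
    (ht : #t = finrank F V) (ht' : t ∉ N) (hst : s ⊆ t) : LinearIndepOn F v s :=
  ((h t ht).2 ht').mono (Finset.coe_subset.2 hst)

lemma HasNonbases.ne_zero (h : HasNonbases F N v) {a : ι}
    (ha : ∃ t ∉ N, #t = finrank F V ∧ a ∈ t) : v a ≠ 0 := by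
  obtain ⟨t, ht', ht, hat⟩ := ha
  exact ((h t ht).2 ht').ne_zero (Finset.mem_coe.2 hat)

lemma HasNonbases.injective [DecidableEq ι] (h : HasNonbases F N v)
    (hpair : ∀ a b, ∃ t ∉ N, #t = finrank F V ∧ {a, b} ⊆ t) : Function.Injective v := by
  intro a b hab
  obtain ⟨t, ht', ht, hst⟩ := hpair a b
  exact (h.linearIndepOn_of_subset ht ht' hst).injOn (by simp) (by simp) hab

lemma hasNonbases_units_smul_iff (c : ι → Fˣ) :
    HasNonbases F N (c • v) ↔ HasNonbases F N v :=
  forall₂_congr fun s _ => iff_congr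
    (LinearIndependent.units_smul_iff (fun a : s => v a) fun a : s => c a) Iff.rfl

lemma hasNonbases_comp_equiv_iff {ι' : Type*} (e : ι ≃ ι') {w : ι' → V} :
    HasNonbases F N (w ∘ e) ↔ HasNonbases F (N.map e.finsetCongr.toEmbedding) w := by
  refine e.finsetCongr.forall_congr fun s => ?_
  rw [Finset.mem_map_equiv, Equiv.symm_apply_apply, linearIndepOn_equiv]
  simp

end HasNonbases

section Projective

variable {ι F V : Type*} [Field F] [AddCommGroup V] [Module F V]

lemma smul_rep_injective : Function.Injective fun p : ℙ F V × Fˣ => p.2 • p.1.rep := by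
  rintro ⟨x, c⟩ ⟨y, d⟩ (h : c • x.rep = d • y.rep)
  obtain rfl : x = y := by
    rw [← mk_rep x, ← mk_rep y, mk_eq_mk_iff]
    exact ⟨c⁻¹ * d, by rw [mul_smul, ← h, inv_smul_smul]⟩
  exact Prod.ext rfl (Units.ext (smul_left_injective F x.rep_nonzero h))

lemma exists_smul_rep_eq {v : V} (hv : v ≠ 0) : ∃ p : ℙ F V × Fˣ, p.2 • p.1.rep = v := by
  obtain ⟨c, hc⟩ := exists_smul_eq_mk_rep F v hv
  exact ⟨(mk F v hv, c⁻¹), by rw [← hc, inv_smul_smul]⟩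

lemma card_projective_mul_card_units {N : Finset (Finset ι)}
    (hloop : ∀ a, ∃ t ∉ N, #t = finrank F V ∧ a ∈ t) :
    Nat.card {σ : ι → ℙ F V // HasNonbases F N (Projectivization.rep ∘ σ)} * Nat.card (ι → Fˣ) =
      Nat.card {v : ι → V // HasNonbases F N v} := by
  rw [← Nat.card_prod]
  refine Nat.card_eq_of_bijective
    (fun p => ⟨p.2 • (Projectivization.rep ∘ p.1.1), (hasNonbases_units_smul_iff _).2 p.1.2⟩)
    ⟨?_, ?_⟩
  · rintro ⟨⟨σ, _⟩, c⟩ ⟨⟨τ, _⟩, d⟩ h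
    have hpt (a : ι) : (σ a, c a) = (τ a, d a) :=
      smul_rep_injective (congrFun (congrArg Subtype.val h) a)
    obtain rfl : σ = τ := funext fun a => congrArg Prod.fst (hpt a)
    obtain rfl : c = d := funext fun a => congrArg Prod.snd (hpt a)
    rfl
  · rintro ⟨v, hv⟩
    choose p hp using fun a => exists_smul_rep_eq (F := F) (hv.ne_zero (hloop a))
    obtain rfl : (fun a => (p a).2) • (Projectivization.rep ∘ fun a => (p a).1) = v := funext hp
    exact ⟨(⟨_, (hasNonbases_units_smul_iff _).1 hv⟩, _), rfl⟩

lemma finrank_sup_submodule_lt_iff (σ : ι → ℙ F V) (s : Finset ι) :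
    finrank F ↥(s.sup fun a => (σ a).submodule) < #s ↔
      ¬ LinearIndepOn F (Projectivization.rep ∘ σ) s := by
  have hspan : s.sup (fun a => (σ a).submodule) =
      Submodule.span F (Set.range fun a : s => (σ a).rep) := by
    simp only [Finset.sup_eq_iSup, submodule_eq, Submodule.span_range_eq_iSup, iSup_subtype]
  rw [hspan, LinearIndepOn, linearIndependent_iff_card_le_finrank_span, not_le, Set.finrank]
  simp

end Projective

section Duality

variable {ι κ μ F : Type*} [Field F] [Fintype κ]

lemma linearIndepOn_row_iff {A : Matrix ι κ F} {s : Finset ι} (hs : #s = Fintype.card κ) :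
    LinearIndepOn F A.row s ↔ ∀ y, (∀ a ∈ s, (A *ᵥ y) a = 0) → y = 0 := by
  classical
  let e : κ ≃ s := Fintype.equivOfCardEq (by simp [hs])
  let M : Matrix κ κ F := A.submatrix (fun i => (e i : ι)) id
  have hrow : LinearIndepOn F A.row s ↔ LinearIndependent F M.row :=
    (linearIndependent_equiv e).symm
  have hker : (∀ y, (∀ a ∈ s, (A *ᵥ y) a = 0) → y = 0) ↔ ∀ y, M *ᵥ y = 0 → y = 0 := by
    refine forall_congr' fun y => imp_congr_left ?_
    rw [funext_iff, e.forall_congr_left]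
    simp [M, mulVec, dotProduct]
  rw [hrow, hker, linearIndependent_rows_iff_isUnit, ← mulVec_injective_iff_isUnit]
  exact injective_iff_map_eq_zero M.mulVecLin

lemma linearIndependent_col_of_linearIndepOn_row {A : Matrix ι κ F} {s : Finset ι}
    (hs : #s = Fintype.card κ) (h : LinearIndepOn F A.row s) : LinearIndependent F A.col := by
  rw [← mulVec_injective_iff]
  refine (injective_iff_map_eq_zero A.mulVecLin).2 fun y hy => ?_
  exact (linearIndepOn_row_iff hs).1 h y fun a _ => congrFun hy a

lemma HasNonbases.linearIndependent_col {N : Finset (Finset ι)} {A : Matrix ι κ F}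
    (h : HasNonbases F N A.row) (hbasis : ∃ s ∉ N, #s = Fintype.card κ) :
    LinearIndependent F A.col := by
  obtain ⟨s, hsN, hs⟩ := hbasis
  exact linearIndependent_col_of_linearIndepOn_row hs
    ((h s (by rwa [finrank_fintype_fun_eq_card])).2 hsN)

variable [Fintype ι] [DecidableEq ι]

-- A vector `A y` vanishing on `s` is a linear relation among the rows of `B` outside `s`.
lemma linearIndepOn_row_of_compl {A : Matrix ι κ F} {B : Matrix ι μ F} {s : Finset ι}
    (hA : LinearIndependent F A.col) (hAB : Aᵀ * B = 0) (hs : #s = Fintype.card κ)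
    (h : LinearIndepOn F B.row ↑sᶜ) : LinearIndepOn F A.row s := by
  refine (linearIndepOn_row_iff hs).2 fun y hy => ?_
  have hrel : ∑ b ∈ sᶜ, (A *ᵥ y) b • B.row b = 0 := calc
    _ = ∑ b, (A *ᵥ y) b • B.row b :=
      Finset.sum_subset (Finset.subset_univ _) fun a _ ha => by
        rw [hy a (by simpa using ha), zero_smul]
    _ = (y ᵥ* Aᵀ) ᵥ* B := by rw [vecMul_transpose, vecMul_eq_sum]; rfl
    _ = 0 := by rw [vecMul_vecMul, hAB, vecMul_zero]
  have hAy : A *ᵥ y = 0 := funext fun a => by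
    by_cases ha : a ∈ s
    · exact hy a ha
    · exact linearIndepOn_finset_iff.1 h _ hrel a (by simpa using ha)
  exact mulVec_injective_iff.2 hA (hAy.trans (mulVec_zero A).symm)

variable [Fintype μ]

lemma linearIndepOn_row_iff_compl {A : Matrix ι κ F} {B : Matrix ι μ F} {s : Finset ι}
    (hA : LinearIndependent F A.col) (hB : LinearIndependent F B.col) (hAB : Aᵀ * B = 0)
    (hs : #s = Fintype.card κ) (hs' : #sᶜ = Fintype.card μ) :
    LinearIndepOn F A.row s ↔ LinearIndepOn F B.row ↑sᶜ := by
  have hBA : Bᵀ * A = 0 := by simpa using congrArg transpose hAB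
  exact ⟨fun h => linearIndepOn_row_of_compl hB hBA hs' (by rwa [compl_compl]),
    linearIndepOn_row_of_compl hA hAB hs⟩

lemma HasNonbases.dual {N : Finset (Finset ι)} {A : Matrix ι κ F} {B : Matrix ι μ F}
    (hcard : Fintype.card κ + Fintype.card μ = Fintype.card ι)
    (hA : LinearIndependent F A.col) (hB : LinearIndependent F B.col) (hAB : Aᵀ * B = 0)
    (h : HasNonbases F N A.row) : HasNonbases F Nᶜˢ B.row := by
  intro s hs
  rw [finrank_fintype_fun_eq_card] at hs
  have hs' : #sᶜ = Fintype.card κ := by rw [Finset.card_compl]; omega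
  rw [Finset.mem_compls, ← h sᶜ (by rwa [finrank_fintype_fun_eq_card]),
    linearIndepOn_row_iff_compl hA hB hAB hs' (by rwa [compl_compl]), compl_compl]

end Duality

section Counting

variable {ι F : Type*} [Field F] [Fintype ι] {k l : ℕ}

lemma finrank_ker_transpose {A : Matrix ι (Fin k) F} (hkl : k + l = Fintype.card ι)
    (hA : LinearIndependent F A.col) : finrank F (LinearMap.ker Aᵀ.mulVecLin) = l := by
  have hrank : finrank F (LinearMap.range Aᵀ.mulVecLin) = k :=
    (LinearIndependent.rank_matrix (M := Aᵀ) hA).trans (Fintype.card_fin k)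
  have := Aᵀ.mulVecLin.finrank_range_add_finrank_ker
  rw [hrank, finrank_fintype_fun_eq_card] at this
  omega

/-- The columns of a matrix `B` with `Aᵀ * B = 0`, viewed as vectors of the kernel of `Aᵀ`. -/
def orthogonalEquivKer (A : Matrix ι (Fin k) F) :
    {B : Matrix ι (Fin l) F // Aᵀ * B = 0 ∧ LinearIndependent F B.col} ≃
      {u : Fin l → LinearMap.ker Aᵀ.mulVecLin // LinearIndependent F u} where
  toFun B := ⟨fun j => ⟨B.1.col j, funext fun i => congrFun₂ B.2.1 i j⟩,
    .of_comp (Submodule.subtype _) B.2.2⟩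
  invFun u := ⟨of fun a j => (u.1 j : ι → F) a,
    Matrix.ext fun i j => congrFun (LinearMap.mem_ker.1 (u.1 j).2) i,
    u.2.map' (Submodule.subtype _) (Submodule.ker_subtype _)⟩

variable [Finite F]

lemma card_orthogonal {A : Matrix ι (Fin k) F}
    (hkl : k + l = Fintype.card ι) (hA : LinearIndependent F A.col) :
    Nat.card {B : Matrix ι (Fin l) F // Aᵀ * B = 0 ∧ LinearIndependent F B.col} =
      Nat.card (GL (Fin l) F) := by
  have := Fintype.ofFinite F
  have hK := finrank_ker_transpose hkl hA
  rw [Nat.card_congr (orthogonalEquivKer A), card_linearIndependent hK.ge, hK, card_GL_field]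

variable [DecidableEq ι] {N : Finset (Finset ι)}

lemma card_dual_realizations {A : Matrix ι (Fin k) F} (hkl : k + l = Fintype.card ι)
    (hbasis : ∃ s ∉ N, #s = k) (h : HasNonbases F N A.row) :
    Nat.card {B : Matrix ι (Fin l) F // HasNonbases F Nᶜˢ B.row ∧ Aᵀ * B = 0} =
      Nat.card (GL (Fin l) F) := by
  have hA : LinearIndependent F A.col := h.linearIndependent_col (by simpa using hbasis)
  rw [← card_orthogonal hkl hA]
  refine Nat.card_congr (Equiv.subtypeEquivRight fun B => ⟨fun ⟨hB, hAB⟩ => ⟨hAB, ?_⟩,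
    fun ⟨hAB, hB⟩ => ⟨h.dual (by simpa using hkl) hA hB hAB, hAB⟩⟩)
  obtain ⟨s, hsN, hs⟩ := hbasis
  refine hB.linearIndependent_col ⟨sᶜ, by simpa using hsN, ?_⟩
  rw [Finset.card_compl, Fintype.card_fin]
  omega

lemma card_matrix_realizations_mul_card_GL (hkl : k + l = Fintype.card ι)
    (hbasis : ∃ s ∉ N, #s = k) :
    Nat.card {A : Matrix ι (Fin k) F // HasNonbases F N A.row} * Nat.card (GL (Fin l) F) =
      Nat.card {B : Matrix ι (Fin l) F // HasNonbases F Nᶜˢ B.row} * Nat.card (GL (Fin k) F) := by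
  classical
  have := Fintype.ofFinite F
  have hbasis' : ∃ s ∉ Nᶜˢ, #s = l := by
    obtain ⟨s, hsN, hs⟩ := hbasis
    exact ⟨sᶜ, by simpa using hsN, by rw [Finset.card_compl]; omega⟩
  simp only [Nat.card_eq_fintype_card, Fintype.card_subtype]
  refine Finset.card_mul_eq_card_mul
    (fun (A : Matrix ι (Fin k) F) (B : Matrix ι (Fin l) F) => Aᵀ * B = 0)
    (fun A hA => ?_) fun B hB => ?_
  · rw [Finset.bipartiteAbove, Finset.filter_filter, ← Fintype.card_subtype,
      ← Nat.card_eq_fintype_card, ← Nat.card_eq_fintype_card,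
      card_dual_realizations hkl hbasis (Finset.mem_filter.1 hA).2]
  · have hsymm (A : Matrix ι (Fin k) F) : Aᵀ * B = 0 ↔ Bᵀ * A = 0 := by
      rw [← transpose_eq_zero, transpose_mul, transpose_transpose]
    simp only [Finset.bipartiteBelow, Finset.filter_filter, hsymm]
    rw [← Fintype.card_subtype, ← Nat.card_eq_fintype_card, ← Nat.card_eq_fintype_card,
      ← card_dual_realizations (by omega) hbasis' (Finset.mem_filter.1 hB).2, Finset.compls_compls]

theorem card_projective_realizations_mul_card_GL [Nonempty ι] (hkl : k + l = Fintype.card ι)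
    (hloop : ∀ a, ∃ s ∉ N, #s = k ∧ a ∈ s) (hcoloop : ∀ a, ∃ s ∉ N, #s = k ∧ a ∉ s) :
    Nat.card {σ : ι → ℙ F (Fin k → F) // HasNonbases F N (Projectivization.rep ∘ σ)} *
        Nat.card (GL (Fin l) F) =
      Nat.card {τ : ι → ℙ F (Fin l → F) // HasNonbases F Nᶜˢ (Projectivization.rep ∘ τ)} *
        Nat.card (GL (Fin k) F) := by
  have hbasis : ∃ s ∉ N, #s = k :=
    (hloop (Classical.arbitrary ι)).imp fun s hs => ⟨hs.1, hs.2.1⟩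
  have hcoloop' (a : ι) : ∃ t ∉ Nᶜˢ, #t = l ∧ a ∈ t := by
    obtain ⟨s, hsN, hs, has⟩ := hcoloop a
    exact ⟨sᶜ, by simpa using hsN, by rw [Finset.card_compl]; omega, by simpa using has⟩
  have hmatrix := card_matrix_realizations_mul_card_GL (F := F) hkl hbasis
  have hσ := card_projective_mul_card_units (F := F) (N := N) (V := Fin k → F)
    (by simpa only [finrank_fin_fun] using hloop)
  have hτ := card_projective_mul_card_units (F := F) (N := Nᶜˢ) (V := Fin l → F)
    (by simpa only [finrank_fin_fun] using hcoloop')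
  refine Nat.eq_of_mul_eq_mul_right (Nat.card_pos (α := ι → Fˣ)) ?_
  rw [mul_right_comm, hσ, mul_right_comm, hτ]
  exact hmatrix

end Counting

lemma card_sub_one_dvd_card_GL {F : Type*} [Field F] [Fintype F] {k : ℕ} (hk : k ≠ 0) :
    Fintype.card F - 1 ∣ Nat.card (GL (Fin k) F) := by
  have : NeZero k := ⟨hk⟩
  rw [card_GL_field]
  refine dvd_trans ?_ (Finset.dvd_prod_of_mem _ (Finset.mem_univ (0 : Fin k)))
  simpa using Nat.sub_one_dvd_pow_sub_one (Fintype.card F) k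

section FanoPlane

variable {F : Type} [Field F]

lemma collinear3_iff {ι : Type*} [DecidableEq ι] {σ : ι → ℙ F (Fin 4 → F)} {a b c : ι}
    (hs : #{a, b, c} = 3) : Collinear3 F (σ a) (σ b) (σ c) ↔
      ¬ LinearIndepOn F (Projectivization.rep ∘ σ) ↑({a, b, c} : Finset ι) := by
  rw [Collinear3, ← finrank_sup_submodule_lt_iff, hs, Nat.lt_succ_iff,
    Finset.sup_insert, Finset.sup_insert, Finset.sup_singleton, sup_assoc]

lemma coplanar4_iff {ι : Type*} [DecidableEq ι] {σ : ι → ℙ F (Fin 4 → F)} {a b c d : ι}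
    (hs : #{a, b, c, d} = 4) : Coplanar4 F (σ a) (σ b) (σ c) (σ d) ↔
      ¬ LinearIndepOn F (Projectivization.rep ∘ σ) ↑({a, b, c, d} : Finset ι) := by
  rw [Coplanar4, ← finrank_sup_submodule_lt_iff, hs, Nat.lt_succ_iff,
    Finset.sup_insert, Finset.sup_insert, Finset.sup_insert, Finset.sup_singleton, sup_assoc,
    sup_assoc]

lemma collinear3P2_iff {ι : Type*} [DecidableEq ι] {τ : ι → ℙ F (Fin 3 → F)} {a b c : ι}
    (hs : #{a, b, c} = 3) : Collinear3P2 F (τ a) (τ b) (τ c) ↔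
      ¬ LinearIndepOn F (Projectivization.rep ∘ τ) ↑({a, b, c} : Finset ι) := by
  rw [Collinear3P2, ← finrank_sup_submodule_lt_iff, hs, Nat.lt_succ_iff,
    Finset.sup_insert, Finset.sup_insert, Finset.sup_singleton, sup_assoc]

lemma isConfigReal_iff_hasNonbases {planes : Finset (Finset (Fin 7))}
    (hplanes : ∀ h ∈ planes, #h = 4)
    (htriple : ∀ s, #s ≤ 3 → ∃ t ∉ planes, #t = 4 ∧ s ⊆ t) (σ : Fin 7 → ℙ F (Fin 4 → F)) :
    IsConfigReal F planes ∅ σ ↔ HasNonbases F planes (Projectivization.rep ∘ σ) := by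
  have hmem {s : Finset (Fin 7)} (hs : #s = 4) : (∃ h ∈ planes, s ⊆ h) ↔ s ∈ planes :=
    ⟨fun ⟨h, hh, hsh⟩ => Finset.eq_of_subset_of_card_le hsh (by rw [hs, hplanes h hh]) ▸ hh,
      fun hs' => ⟨s, hs', subset_rfl⟩⟩
  constructor
  · rintro ⟨-, -, hcop⟩ s hs
    rw [finrank_fin_fun] at hs
    obtain ⟨a, b, c, d, hab, hac, had, hbc, hbd, hcd, rfl⟩ := Finset.card_eq_four.1 hs
    rw [← not_iff_not, ← coplanar4_iff hs, hcop a b c d hab hac had hbc hbd hcd, hmem hs, not_not]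
  · intro h
    refine ⟨Function.Injective.of_comp (h.injective fun a b => ?_),
      fun a b c hab hac hbc => ?_, fun a b c d hab hac had hbc hbd hcd => ?_⟩
    · simpa using htriple {a, b} (Finset.card_le_two.trans (by norm_num))
    · have hs : #{a, b, c} = 3 := Finset.card_eq_three.2 ⟨a, b, c, hab, hac, hbc, rfl⟩
      obtain ⟨t, ht', ht, hst⟩ := htriple {a, b, c} hs.le
      simpa [collinear3_iff hs] using h.linearIndepOn_of_subset (by simpa using ht) ht' hst
    · have hs : #{a, b, c, d} = 4 :=
        Finset.card_eq_four.2 ⟨a, b, c, d, hab, hac, had, hbc, hbd, hcd, rfl⟩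
      rw [coplanar4_iff hs, hmem hs, h _ (by simpa using hs), not_not]

lemma isFanoReal_iff_hasNonbases (τ : Fin 7 → ℙ F (Fin 3 → F)) :
    IsFanoReal F τ ↔ HasNonbases F fanoLines (Projectivization.rep ∘ τ) := by
  have hpair : ∀ a b, ∃ t ∉ fanoLines, #t = 3 ∧ {a, b} ⊆ t := by decide +kernel
  constructor
  · rintro ⟨-, hcol⟩ s hs
    rw [finrank_fin_fun] at hs
    obtain ⟨a, b, c, hab, hac, hbc, rfl⟩ := Finset.card_eq_three.1 hs
    rw [← not_iff_not, ← collinear3P2_iff hs, hcol a b c hab hac hbc, not_not]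
  · refine fun h => ⟨Function.Injective.of_comp (h.injective (by simpa using hpair)),
      fun a b c hab hac hbc => ?_⟩
    have hs : #{a, b, c} = 3 := Finset.card_eq_three.2 ⟨a, b, c, hab, hac, hbc, rfl⟩
    rw [collinear3P2_iff hs, h _ (by simpa using hs), not_not]

lemma exists_superset_notMem_h2planes :
    ∀ s : Finset (Fin 7), #s ≤ 3 → ∃ t ∉ h2planes, #t = 4 ∧ s ⊆ t := by
  decide +kernel

-- The labellings of the two configurations differ by exchanging `1` and `5`.
lemma map_swap_compls_h2planes :
    h2planesᶜˢ.map (Equiv.swap 1 5).finsetCongr.toEmbedding = fanoLines := by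
  decide +kernel

lemma isFanoReal_iff_hasNonbases_compls (τ : Fin 7 → ℙ F (Fin 3 → F)) :
    IsFanoReal F τ ↔
      HasNonbases F h2planesᶜˢ (Projectivization.rep ∘ (τ ∘ Equiv.swap 1 5)) := by
  rw [isFanoReal_iff_hasNonbases, ← map_swap_compls_h2planes, ← hasNonbases_comp_equiv_iff,
    Function.comp_assoc]

theorem card_isConfigReal_mul_card_GL [Finite F] :
    Nat.card {σ : Fin 7 → ℙ F (Fin 4 → F) // IsConfigReal F h2planes ∅ σ} *
        Nat.card (GL (Fin 3) F) =
      Nat.card {τ : Fin 7 → ℙ F (Fin 3 → F) // IsFanoReal F τ} * Nat.card (GL (Fin 4) F) := by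
  have hσ := Nat.card_congr (Equiv.subtypeEquivRight (isConfigReal_iff_hasNonbases (F := F)
    (by decide +kernel) exists_superset_notMem_h2planes))
  have hτ : Nat.card {τ // IsFanoReal F τ} =
      Nat.card {τ : Fin 7 → ℙ F (Fin 3 → F) //
        HasNonbases F h2planesᶜˢ (Projectivization.rep ∘ τ)} :=
    Nat.card_congr <| ((Equiv.swap 1 5).arrowCongr (.refl _)).subtypeEquiv
      isFanoReal_iff_hasNonbases_compls
  rw [hσ, hτ]
  exact card_projective_realizations_mul_card_GL (by simp) (by decide +kernel) (by decide +kernel)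

end FanoPlane

/-- `A_{h₂}(4,q) · |PGL₃(F_q)| = F(q) · |PGL₄(F_q)|`, relating strong realizations of the
complement of the Fano plane in `ℙ³(F_q)` to strong realizations of the Fano plane in
`ℙ²(F_q)`. -/
theorem Ah2_vs_fano (F : Type) [Field F] [Fintype F] (q : ℕ) (hq : q = Fintype.card F) :
    Nat.card {σ : Fin 7 → ℙ F (Fin 4 → F) // IsConfigReal F h2planes ∅ σ} *
        (Nat.card (GL (Fin 3) F) / (q - 1)) =
      Nat.card {τ : Fin 7 → ℙ F (Fin 3 → F) // IsFanoReal F τ} *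
        (Nat.card (GL (Fin 4) F) / (q - 1)) := by
  subst hq
  rw [← Nat.mul_div_assoc _ (card_sub_one_dvd_card_GL (by decide)),
    ← Nat.mul_div_assoc _ (card_sub_one_dvd_card_GL (by decide)), card_isConfigReal_mul_card_GL]
end
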